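/- arXiv:1607.08455 — 2 statements merged into one kernel-verified Lean document; each statement's English description precedes it below -/
import Mathlib

section
/- Let k be an odd positive integer with k ≥ 3, i a positive integer with gcd(i,k) = 1, t a natural number with 0 ≤ t ≤ k−1, e = (2^i + 1)·2^t, F = GaloisField 2 k, and α ∈ F with α ≠ 0 and α ≠ 1. Define V : F × F → F × F by V(x,y) = ((αx + y)^e + x^e, (x + αy)^e + y^e), with components V₁, V₂, and for a, b, c, d ∈ F let W((a,b),(c,d)) = Σ_{x,y ∈ F} χ(Tr(c·V₁(x,y) + d·V₂(x,y) + a·x + b·y)). Then the maximum of |W((a,b),(c,d))| over all a, b ∈ F and (c,d) ≠ (0,0) equals 2^(k+1); equivalently, the nonlinearity of V, namely 2^(2k−1) − (1/2)·max |W|, equals 2^(2k−1) − 2^k. -/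
noncomputable instance (k : ℕ) : Fintype (GaloisField 2 k) := Fintype.ofFinite _

/-- The absolute trace `Tr(x) = x + x^2 + ⋯ + x^(2^(k-1))` of `GaloisField 2 k`,
computed inside the field (its values lie in the prime subfield `{0, 1}`). -/
noncomputable def absTrace (k : ℕ) (x : GaloisField 2 k) : GaloisField 2 k :=
  ∑ j ∈ Finset.range k, x ^ 2 ^ j

/-- The Walsh transform `W((a,b),(c,d)) = Σ_{x,y} χ(Tr(c·V₁(x,y) + d·V₂(x,y) + ax + by))`
of the closed butterfly `V(x,y) = ((αx+y)^e + x^e, (x+αy)^e + y^e)`, where `χ(0) = 1`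
and `χ(1) = -1`. -/
noncomputable def butterflyWalsh (k e : ℕ) (α a b c d : GaloisField 2 k) : ℤ :=
  haveI := Classical.decEq (GaloisField 2 k)
  ∑ x : GaloisField 2 k, ∑ y : GaloisField 2 k,
    if absTrace k (c * ((α * x + y) ^ e + x ^ e) + d * ((x + α * y) ^ e + y ^ e)
        + a * x + b * y) = 0 then 1 else -1


section
variable {F : Type*} [Field F] [CharP F 2]

theorem bf_final (σ : F →+* F) (h1 : ∀ x, σ x = x → x = 0 ∨ x = 1)
    (h2 : ∀ x, σ (σ x) = x → x = 0 ∨ x = 1) (h3 : ∀ x : F, x ^ 4 = x → x = 0 ∨ x = 1)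
    (v : F) (h : v * σ v * σ (σ v) + σ (σ v) + v + σ v ^ 2 = 0) : v = 0 ∨ v = 1 := by
  have t : (2 : F) = 0 := CharTwo.two_eq_zero
  set x := v with hx
  set y := σ x with hy
  set z := σ y with hz
  by_cases hG : x * y + 1 = 0
  · have hy' : y * z + 1 = 0 := by
      have := congrArg σ hG
      simpa [← hy, ← hz] using this
    have : y ^ 4 = y := by grind
    have : σ (x ^ 4) = σ x := by rw [map_pow]; exact this
    exact h3 _ (σ.injective this)
  have hG' : y * z + 1 ≠ 0 := by
    intro h0
    apply hG
    apply σ.injective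
    simpa [← hy, ← hz] using h0
  have hI : σ ((x ^ 2 * y + x * y ^ 2 + x ^ 2 + y ^ 2) / (x * y + 1)) =
      (x ^ 2 * y + x * y ^ 2 + x ^ 2 + y ^ 2) / (x * y + 1) := by
    simp only [map_div₀, map_add, map_mul, map_pow, map_one, ← hy, ← hz]
    rw [div_eq_div_iff hG' hG]
    grind
  rcases h1 _ hI with h0 | h0
  · rw [div_eq_zero_iff] at h0
    have h0 := h0.resolve_right hG
    have : (x + y) * (x * y + x + y) = 0 := by grind
    rcases mul_eq_zero.1 this with h4 | h4
    · exact h1 x (by grind)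
    · -- (1+x)(1+y) = 1
      have e1 : (1 + x) * (1 + y) = 1 := by grind
      have e2 : (1 + y) * (1 + z) = 1 := by
        have := congrArg σ e1
        simpa [← hy, ← hz] using this
      have : x = z := by grind
      exact h2 x this.symm
  · rw [div_eq_one_iff_eq hG] at h0
    have : (x + 1) * (y + 1) * (x + y + 1) = 0 := by grind
    rcases mul_eq_zero.1 this with h4 | h4
    · rcases mul_eq_zero.1 h4 with h5 | h5
      · right; grind
      · right; apply σ.injective; rw [map_one, ← hy]; grind
    · have e2 : y + z + 1 = 0 := by
        have := congrArg σ h4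
        simpa [← hy, ← hz] using this
      exact h2 x (by grind)

theorem bf_poly1 (e E s : F) : (1 + s) * ((e + E) * ((1 + s) * (e + E) + 1 + e * E) * ((1 + s) + e) *
        ((1 + s) + E)) - ((e * (s * (e ^ 2 + 1 + e * s) + e * (1 + s)) + (1 + s)) * (E * (E ^ 2 + 1 + s * E) + s * (1 + s)) +
      (e * (e ^ 2 + 1 + e * s) + s * (1 + s)) * (E * (s * (E ^ 2 + 1 + s * E) + (1 + s) * E) + (1 + s))) = 0 := by
  have t : (2 : F) = 0 := CharTwo.two_eq_zero
  grind only

theorem bf_poly2 (e E Z s r : F) (k2 : (1 + s) * (e + E) + 1 + e * E = 0)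
    (k2' : (1 + r) * (E + Z) + 1 + E * Z = 0) (h : E ^ 2 + 1 = (s * r + s + r) * E) :
    (1 + E) ^ 2 * ((1 + e) * (1 + E) * (1 + Z) + (1 + Z) + (1 + e) + (1 + E) ^ 2) = 0 := by
  have t : (2 : F) = 0 := CharTwo.two_eq_zero
  have h1 : (1 + s) * (e + E) = 1 + e * E := by grind only
  have h2 : (1 + r) * (E + Z) = 1 + E * Z := by grind only
  have h3 : E ^ 2 + E + 1 = (1 + s) * (1 + r) * E := by grind only
  have h4 : (E ^ 2 + E + 1) * (e + E) * (E + Z) = (1 + e * E) * (1 + E * Z) * E := by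
    rw [h3, ← h1, ← h2]; ring
  grind only

theorem bf_poly3 (σ : F →+* F) (α e s r E : F) (hs : s = σ α) (hr : r = σ s) (hE : E = σ e)
    (he : e ≠ 0) (he1 : e ≠ 1)
    (hdet : e ^ 2 + 1 = (α * s + α + s) * e)
    (E22 : (s * e ^ 2 + α) * (r * E ^ 2 + s) +
       (e ^ 2 + (α * s + 1)) * ((s * r + 1) * E ^ 2 + 1) = 0)
    (h : (1 + s) + e = 0) : False := by
  have t : (2 : F) = 0 := CharTwo.two_eq_zero
  have s1 : s = 1 + e := by grind only
  subst s1
  have q0 : α * e ^ 2 = (1 + e) := by grind only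
  have q1 : (α * (1 + e) + 1) * e ^ 2 + 1 = 0 := by grind only
  have q1' : ((1 + e) * r + 1) * E ^ 2 + 1 = 0 := by
    have := congrArg σ q1
    simpa [← hs, ← hr, ← hE] using this
  have q2 : ((1 + e) * e ^ 2 + α) * (r * E ^ 2 + (1 + e)) = 0 := by
    rw [q1'] at E22; simpa using E22
  have q3 : (1 + e) * e ^ 2 + α = 0 := by
    rcases mul_eq_zero.1 q2 with h | h
    · exact h
    · apply σ.injective
      have h' : (r * σ e ^ 2 + σ α) = 0 := by rw [← hE, ← hs]; exact h
      simpa [← hr] using h'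
  have : (1 + e) ^ 5 = 0 := by grind only
  have := pow_eq_zero_iff (by norm_num) |>.1 this
  exact he1 (by grind only)

theorem bf_poly4 (σ : F →+* F) (α e s r E : F) (hs : s = σ α) (hr : r = σ s) (hE : E = σ e)
    (he : e ≠ 0) (he1 : e ≠ 1)
    (hdet : e ^ 2 + 1 = (α * s + α + s) * e)
    (E11 : ((α * s + 1) * e ^ 2 + 1) * (E ^ 2 + (s * r + 1)) +
       (α * e ^ 2 + s) * (s * E ^ 2 + r) = 0)
    (h : (1 + s) + E = 0) : False := by
  have t : (2 : F) = 0 := CharTwo.two_eq_zero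
  have a1 : α = 1 + e := by
    apply σ.injective
    rw [map_add, map_one, ← hs, ← hE]; grind only
  subst a1
  have q0 : s * e ^ 2 = (1 + e) := by grind only
  have q1 : ((1 + e) * s + 1) * e ^ 2 + 1 = 0 := by grind only
  have q2 : ((1 + e) * e ^ 2 + s) * (s * E ^ 2 + r) = 0 := by
    rw [q1] at E11; simpa using E11
  have q3 : (1 + e) * e ^ 2 + s = 0 := by
    rcases mul_eq_zero.1 q2 with h | h
    · exact h
    · apply σ.injective
      rw [hE] at h
      simpa [← hs, ← hr] using h
  have : (1 + e) ^ 5 = 0 := by grind only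
  have := pow_eq_zero_iff (by norm_num) |>.1 this
  exact he1 (by grind only)

theorem bf_bad1 (σ : F →+* F) (h1 : ∀ x, σ x = x → x = 0 ∨ x = 1)
    (h2 : ∀ x, σ (σ x) = x → x = 0 ∨ x = 1) (h3 : ∀ x : F, x ^ 4 = x → x = 0 ∨ x = 1)
    (α e s r E : F) (hs : s = σ α) (hr : r = σ s) (hE : E = σ e) (hα0 : α ≠ 0) (hα1 : α ≠ 1)
    (he : e ≠ 0)
    (hdet : e ^ 2 + 1 = (α * s + α + s) * e)
    (E11 : ((α * s + 1) * e ^ 2 + 1) * (E ^ 2 + (s * r + 1)) +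
       (α * e ^ 2 + s) * (s * E ^ 2 + r) = 0)
    (E12 : ((α * s + 1) * e ^ 2 + 1) * (r * E ^ 2 + s) +
       (α * e ^ 2 + s) * ((s * r + 1) * E ^ 2 + 1) = 0)
    (E22 : (s * e ^ 2 + α) * (r * E ^ 2 + s) +
       (e ^ 2 + (α * s + 1)) * ((s * r + 1) * E ^ 2 + 1) = 0) : False := by
  have t : (2 : F) = 0 := CharTwo.two_eq_zero
  have hb : 1 + s ≠ 0 := by
    intro h
    apply hα1
    apply σ.injective
    rw [map_one, ← hs]; grind
  have hE0 : E ≠ 0 := by rw [hE]; simpa using he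
  have hg : α * s + α + s ≠ 0 := by
    intro hg
    have hg' : s * r + s + r = 0 := by
      have := congrArg σ hg
      simpa [← hs, ← hr] using this
    have : α = r := by
      have e1 : (1 + α) * (1 + s) = 1 := by grind
      have e2 : (1 + r) * (1 + s) = 1 := by grind
      have := mul_right_cancel₀ hb (e1.trans e2.symm)
      exact add_left_cancel this
    rcases h2 α (by rw [← hs, ← hr]; exact this.symm) with h | h
    · exact hα0 h
    · exact hα1 h
  have he1 : e ≠ 1 := by
    rintro rfl
    apply hg
    grind
  have hdet' : E ^ 2 + 1 = (s * r + s + r) * E := by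
    have := congrArg σ hdet
    simpa [← hs, ← hr, ← hE] using this
  have key : (e + E) * ((1 + s) * (e + E) + 1 + e * E) * ((1 + s) + e) * ((1 + s) + E) = 0 := by
    have a1 : α = (e + e⁻¹ + s) / (1 + s) := by
      field_simp; grind
    have a2 : r = (E + E⁻¹ + s) / (1 + s) := by
      field_simp; grind
    rw [a1, a2] at E12
    field_simp at E12
    rw [mul_zero] at E12
    clear a1 a2 E11 E22 hdet hdet' h1 h2 h3 hs hr hE
    have : (1 + s) * ((e + E) * ((1 + s) * (e + E) + 1 + e * E) * ((1 + s) + e) *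
        ((1 + s) + E)) = 0 := by
      linear_combination E12 + (bf_poly1 e E s)
    exact (mul_eq_zero.1 this).resolve_left hb
  rcases mul_eq_zero.1 key with key | k4
  · rcases mul_eq_zero.1 key with key | k3
    · rcases mul_eq_zero.1 key with k1 | k2
      · rcases h1 e (by grind only) with h | h
        · exact he h
        · exact he1 h
      · have k2' : (1 + r) * (E + σ E) + 1 + E * σ E = 0 := by
          have := congrArg σ k2
          simpa [← hs, ← hr, ← hE] using this
        have hv1 : 1 + E ≠ 0 := by
          intro h
          apply he1
          apply σ.injective
          rw [map_one, ← hE]; grind only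
        have hx := bf_final σ h1 h2 h3 (1 + e) (by
          simp only [map_add, map_one, ← hE]
          have : (1 + E) ^ 2 * ((1 + e) * (1 + E) * (1 + σ E) + (1 + σ E) + (1 + e) + (1 + E) ^ 2) = 0 :=
            bf_poly2 e E (σ E) s r k2 k2' hdet'
          exact (mul_eq_zero.1 this).resolve_left (pow_ne_zero 2 hv1))
        rcases hx with h | h
        · exact he1 (by grind only)
        · exact he (by grind only)
    · exact bf_poly3 σ α e s r E hs hr hE he he1 hdet E22 k3
  · exact bf_poly4 σ α e s r E hs hr hE he he1 hdet E11 k4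

theorem bf_bad (σ : F →+* F) (h1 : ∀ x, σ x = x → x = 0 ∨ x = 1)
    (h2 : ∀ x, σ (σ x) = x → x = 0 ∨ x = 1) (h3 : ∀ x : F, x ^ 4 = x → x = 0 ∨ x = 1)
    (hsq : ∀ x : F, ∃ y, y ^ 2 = x)
    (α c d : F) (hα0 : α ≠ 0) (hα1 : α ≠ 1) (hcd : c ≠ 0 ∨ d ≠ 0)
    (m1 m2 : F) (hm : m1 ≠ 0 ∨ m2 ≠ 0)
    (b1 : (α * σ α * c + c + d) * m1 + (σ α * c + α * d) * m2 = 0)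
    (b2 : (α * c + σ α * d) * m1 + (c + α * σ α * d + d) * m2 = 0)
    (b3 : (α * σ α * c + c + d) * σ m1 + (α * c + σ α * d) * σ m2 = 0)
    (b4 : (σ α * c + α * d) * σ m1 + (c + α * σ α * d + d) * σ m2 = 0) : False := by
  have t : (2 : F) = 0 := CharTwo.two_eq_zero
  set s := σ α with hs
  have hdet : (α * s * c + c + d) * (c + α * s * d + d) + (s * c + α * d) * (α * c + s * d) = 0 := by
    rcases hm with h | h
    · apply (mul_eq_zero.1 (?_ : m1 * _ = 0)).resolve_left h
      linear_combination (c + α * s * d + d) * b1 - (s * c + α * d) * b2 +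
        t * (m1 * (s * c + α * d) * (α * c + s * d))
    · apply (mul_eq_zero.1 (?_ : m2 * _ = 0)).resolve_left h
      linear_combination (α * s * c + c + d) * b2 - (α * c + s * d) * b1 +
        t * (m2 * (s * c + α * d) * (α * c + s * d))
  have hdet2 : c ^ 2 + d ^ 2 + (α * s + α + s) ^ 2 * (c * d) = 0 := by
    clear b1 b2 b3 b4; grind only
  have hd : d ≠ 0 := by
    rintro rfl
    have : c = 0 := by simpa using hdet2
    simp_all
  have hc : c ≠ 0 := by
    rintro rfl
    have : d = 0 := by simpa using hdet2
    exact hd this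
  obtain ⟨e, he⟩ := hsq (c / d)
  have hce : c = e ^ 2 * d := by rw [he]; field_simp
  have he0 : e ≠ 0 := by
    rintro rfl
    apply hc; rw [hce]; ring
  subst hce
  have hdet3 : e ^ 2 + 1 = (α * s + α + s) * e := by
    have h4 : d ^ 2 * (e ^ 2 + 1 + (α * s + α + s) * e) ^ 2 = 0 := by
      clear b1 b2 b3 b4 hdet; grind only
    have h5 : (e ^ 2 + 1 + (α * s + α + s) * e) = 0 := by
      simpa [hd] using h4
    clear b1 b2 b3 b4 hdet hdet2 h4; grind only
  have c1 : ((α * s + 1) * e ^ 2 + 1) * m1 + (s * e ^ 2 + α) * m2 = 0 := by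
    apply (mul_eq_zero.1 (?_ : d * _ = 0)).resolve_left hd
    linear_combination b1
  have c2 : (α * e ^ 2 + s) * m1 + (e ^ 2 + (α * s + 1)) * m2 = 0 := by
    apply (mul_eq_zero.1 (?_ : d * _ = 0)).resolve_left hd
    linear_combination b2
  have c3 : ((α * s + 1) * e ^ 2 + 1) * σ m1 + (α * e ^ 2 + s) * σ m2 = 0 := by
    apply (mul_eq_zero.1 (?_ : d * _ = 0)).resolve_left hd
    linear_combination b3
  have c4 : (s * e ^ 2 + α) * σ m1 + (e ^ 2 + (α * s + 1)) * σ m2 = 0 := by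
    apply (mul_eq_zero.1 (?_ : d * _ = 0)).resolve_left hd
    linear_combination b4
  have c1' : ((s * σ s + 1) * σ e ^ 2 + 1) * σ m1 + (σ s * σ e ^ 2 + s) * σ m2 = 0 := by
    have := congrArg σ c1
    simpa [← hs] using this
  have c2' : (s * σ e ^ 2 + σ s) * σ m1 + (σ e ^ 2 + (s * σ s + 1)) * σ m2 = 0 := by
    have := congrArg σ c2
    simpa [← hs] using this
  have hm' : σ m1 ≠ 0 ∨ σ m2 ≠ 0 := by simpa using hm
  have hz : ∀ z : F, σ m1 * z = 0 → σ m2 * z = 0 → z = 0 := by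
    intro z z1 z2
    rcases hm' with h | h
    · exact (mul_eq_zero.1 z1).resolve_left h
    · exact (mul_eq_zero.1 z2).resolve_left h
  generalize σ m1 = M1 at *
  generalize σ m2 = M2 at *
  clear b1 b2 b3 b4 hdet hdet2
  refine bf_bad1 σ h1 h2 h3 α e s (σ s) (σ e) hs rfl rfl hα0 hα1 he0 hdet3 ?_ ?_ ?_ <;> apply hz
  · linear_combination (σ e ^ 2 + (s * σ s + 1)) * c3 + (α * e ^ 2 + s) * c2' - t * ((α * e ^ 2 + s) * (σ e ^ 2 + (s * σ s + 1)) * M2)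
  · linear_combination (s * σ e ^ 2 + σ s) * c3 + ((α * s + 1) * e ^ 2 + 1) * c2' - t * (((α * s + 1) * e ^ 2 + 1) * (s * σ e ^ 2 + σ s) * M1)
  · linear_combination (σ s * σ e ^ 2 + s) * c3 + (α * e ^ 2 + s) * c1' - t * ((α * e ^ 2 + s) * (σ s * σ e ^ 2 + s) * M2)
  · linear_combination ((s * σ s + 1) * σ e ^ 2 + 1) * c3 + ((α * s + 1) * e ^ 2 + 1) * c1' - t * (((α * s + 1) * e ^ 2 + 1) * ((s * σ s + 1) * σ e ^ 2 + 1) * M1)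
  · linear_combination (σ s * σ e ^ 2 + s) * c4 + (e ^ 2 + (α * s + 1)) * c1' - t * ((e ^ 2 + (α * s + 1)) * (σ s * σ e ^ 2 + s) * M2)
  · linear_combination ((s * σ s + 1) * σ e ^ 2 + 1) * c4 + (s * e ^ 2 + α) * c1' - t * ((s * e ^ 2 + α) * ((s * σ s + 1) * σ e ^ 2 + 1) * M1)

/-- Solutions of the first-order system. -/
theorem bf_kernel (σ : F →+* F) (h2 : ∀ x, σ (σ x) = x → x = 0 ∨ x = 1)
    (A B C D : F)
    (hbad : ∀ m1 m2 : F, (m1 ≠ 0 ∨ m2 ≠ 0) → A * m1 + B * m2 = 0 → C * m1 + D * m2 = 0 →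
      A * σ m1 + C * σ m2 = 0 → B * σ m1 + D * σ m2 = 0 → False)
    (x1 y1 x2 y2 x3 y3 : F)
    (e1 : σ A * σ (σ x1) + σ C * σ (σ y1) = A * x1 + B * y1)
    (f1 : σ B * σ (σ x1) + σ D * σ (σ y1) = C * x1 + D * y1)
    (e2 : σ A * σ (σ x2) + σ C * σ (σ y2) = A * x2 + B * y2)
    (f2 : σ B * σ (σ x2) + σ D * σ (σ y2) = C * x2 + D * y2)
    (e3 : σ A * σ (σ x3) + σ C * σ (σ y3) = A * x3 + B * y3)
    (f3 : σ B * σ (σ x3) + σ D * σ (σ y3) = C * x3 + D * y3)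
    (n1 : x1 ≠ 0 ∨ y1 ≠ 0) (n2 : x2 ≠ 0 ∨ y2 ≠ 0) (n12 : ¬ (x2 = x1 ∧ y2 = y1)) :
    (x3 = 0 ∧ y3 = 0) ∨ (x3 = x1 ∧ y3 = y1) ∨ (x3 = x2 ∧ y3 = y2) ∨
      (x3 = x1 + x2 ∧ y3 = y1 + y2) := by
  have hΔ : x1 * y2 - x2 * y1 ≠ 0 := by
    intro hΔ
    obtain ⟨l, hl1, hl2⟩ : ∃ l, x2 = l * x1 ∧ y2 = l * y1 := by
      rcases n1 with h | h
      · refine ⟨x2 / x1, by field_simp, ?_⟩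
        field_simp; linear_combination hΔ
      · refine ⟨y2 / y1, ?_, by field_simp⟩
        field_simp; linear_combination -hΔ
    subst hl1 hl2
    simp only [map_mul] at e2 f2
    have g1 : (σ (σ l) - l) * (A * x1 + B * y1) = 0 := by
      linear_combination e2 - σ (σ l) * e1
    have g2 : (σ (σ l) - l) * (C * x1 + D * y1) = 0 := by
      linear_combination f2 - σ (σ l) * f1
    by_cases hl : σ (σ l) = l
    · rcases h2 l hl with rfl | rfl
      · simp at n2
      · simp at n12
    · have g1 := (mul_eq_zero.1 g1).resolve_left (sub_ne_zero.2 hl)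
      have g2 := (mul_eq_zero.1 g2).resolve_left (sub_ne_zero.2 hl)
      refine hbad x1 y1 n1 g1 g2 ?_ ?_
      · apply σ.injective; rw [g1] at e1; simpa using e1
      · apply σ.injective; rw [g2] at f1; simpa using f1
  have hdet : A * D - B * C ≠ 0 := by
    intro hdet
    -- left null vector
    obtain ⟨m1, m2, hm, z1, z2⟩ : ∃ m1 m2 : F, (m1 ≠ 0 ∨ m2 ≠ 0) ∧ A * m1 + B * m2 = 0 ∧
        C * m1 + D * m2 = 0 := by
      by_cases h : A = 0 ∧ B = 0
      · by_cases h' : C = 0 ∧ D = 0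
        · exact ⟨1, 0, by simp, by simp [h.1], by simp [h'.1]⟩
        · refine ⟨D, -C, by rw [neg_ne_zero]; tauto, by rw [h.1, h.2]; ring, by ring⟩
      · refine ⟨B, -A, by rw [neg_ne_zero]; tauto, by ring, by linear_combination -hdet⟩
    have w1 := congrArg σ z1
    have w2 := congrArg σ z2
    simp only [map_add, map_mul, map_zero] at w1 w2
    have p1 : σ m1 * (A * x1 + B * y1) + σ m2 * (C * x1 + D * y1) = 0 := by
      rw [← e1, ← f1]; linear_combination (σ (σ x1)) * w1 + (σ (σ y1)) * w2
    have p2 : σ m1 * (A * x2 + B * y2) + σ m2 * (C * x2 + D * y2) = 0 := by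
      rw [← e2, ← f2]; linear_combination (σ (σ x2)) * w1 + (σ (σ y2)) * w2
    refine hbad m1 m2 hm z1 z2 ?_ ?_
    · apply (mul_eq_zero.1 (?_ : (x1 * y2 - x2 * y1) * _ = 0)).resolve_left hΔ
      linear_combination y2 * p1 - y1 * p2
    · apply (mul_eq_zero.1 (?_ : (x1 * y2 - x2 * y1) * _ = 0)).resolve_left hΔ
      linear_combination x1 * p2 - x2 * p1
  obtain ⟨l, m, hx, hy⟩ : ∃ l m, x3 = l * x1 + m * x2 ∧ y3 = l * y1 + m * y2 := by
    refine ⟨(x3 * y2 - x2 * y3) / (x1 * y2 - x2 * y1), (x1 * y3 - x3 * y1) / (x1 * y2 - x2 * y1), ?_, ?_⟩ <;>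
    · rw [div_mul_eq_mul_div, div_mul_eq_mul_div, ← add_div, eq_div_iff hΔ]; ring
  subst hx hy
  simp only [map_mul, map_add] at e3 f3
  have g1 : (σ (σ l) - l) * (A * x1 + B * y1) + (σ (σ m) - m) * (A * x2 + B * y2) = 0 := by
    linear_combination e3 - σ (σ l) * e1 - σ (σ m) * e2
  have g2 : (σ (σ l) - l) * (C * x1 + D * y1) + (σ (σ m) - m) * (C * x2 + D * y2) = 0 := by
    linear_combination f3 - σ (σ l) * f1 - σ (σ m) * f2
  have hl : (A * D - B * C) * ((x1 * y2 - x2 * y1) * (σ (σ l) - l)) = 0 := by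
    linear_combination (C * x2 + D * y2) * g1 - (A * x2 + B * y2) * g2
  have hm : (A * D - B * C) * ((x1 * y2 - x2 * y1) * (σ (σ m) - m)) = 0 := by
    linear_combination (A * x1 + B * y1) * g2 - (C * x1 + D * y1) * g1
  have hl := sub_eq_zero.1 ((mul_eq_zero.1 ((mul_eq_zero.1 hl).resolve_left hdet)).resolve_left hΔ)
  have hm := sub_eq_zero.1 ((mul_eq_zero.1 ((mul_eq_zero.1 hm).resolve_left hdet)).resolve_left hΔ)
  rcases h2 l hl with rfl | rfl <;> rcases h2 m hm with rfl | rfl <;> simp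

/-- The quadratic form inside the Walsh sum. -/
def bfQ (σ : F →+* F) (α a b c d : F) (v : F × F) : F :=
  c * ((α * v.1 + v.2) * σ (α * v.1 + v.2) + v.1 * σ v.1) +
    d * ((v.1 + α * v.2) * σ (v.1 + α * v.2) + v.2 * σ v.2) + a * v.1 + b * v.2

/-- First coordinate of the linearised polar form. -/
def bfL1 (σ : F →+* F) (α c d : F) (v : F × F) : F :=
  σ (α * σ α * c + c + d) * σ (σ v.1) + σ (α * c + σ α * d) * σ (σ v.2) +
    ((α * σ α * c + c + d) * v.1 + (σ α * c + α * d) * v.2)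

/-- Second coordinate of the linearised polar form. -/
def bfL2 (σ : F →+* F) (α c d : F) (v : F × F) : F :=
  σ (σ α * c + α * d) * σ (σ v.1) + σ (c + α * σ α * d + d) * σ (σ v.2) +
    ((α * c + σ α * d) * v.1 + (c + α * σ α * d + d) * v.2)

theorem bf_polar (σ : F →+* F) (χ : F → ℤ) (hadd : ∀ x y, χ (x + y) = χ x * χ y)
    (hσ : ∀ x, χ (σ x) = χ x) (α a b c d : F) (v u : F × F) :
    χ (bfQ σ α a b c d (v + u)) = χ (bfQ σ α a b c d v) * χ (bfQ σ α a b c d u) *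
      χ (σ v.1 * bfL1 σ α c d u + σ v.2 * bfL2 σ α c d u) := by
  obtain ⟨p, w⟩ := v
  obtain ⟨x, y⟩ := u
  have e1 : bfQ σ α a b c d ((p, w) + (x, y)) = bfQ σ α a b c d (p, w) + bfQ σ α a b c d (x, y) +
      (c * ((α * p + w) * σ (α * x + y) + p * σ x) + d * ((p + α * w) * σ (x + α * y) + w * σ y)) +
      (c * ((α * x + y) * σ (α * p + w) + x * σ p) + d * ((x + α * y) * σ (p + α * w) + y * σ w)) := by
    simp only [bfQ, Prod.mk_add_mk, map_add, map_mul]; ring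
  have e2 : σ p * bfL1 σ α c d (x, y) + σ w * bfL2 σ α c d (x, y) =
      σ (c * ((α * p + w) * σ (α * x + y) + p * σ x) + d * ((p + α * w) * σ (x + α * y) + w * σ y)) +
      (c * ((α * x + y) * σ (α * p + w) + x * σ p) + d * ((x + α * y) * σ (p + α * w) + y * σ w)) := by
    simp only [bfL1, bfL2, map_add, map_mul]; ring
  rw [e1]
  simp only [e2]
  generalize c * ((α * p + w) * σ (α * x + y) + p * σ x) + d * ((p + α * w) * σ (x + α * y) + w * σ y) = T1
  generalize c * ((α * x + y) * σ (α * p + w) + x * σ p) + d * ((x + α * y) * σ (p + α * w) + y * σ w) = T2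
  rw [hadd, hadd, hadd, hadd (σ T1), hσ]; ring

theorem bf_sum_lin [Fintype F] [DecidableEq F] (σ : F →+* F) (χ : F → ℤ) (hadd : ∀ x y, χ (x + y) = χ x * χ y)
    (hsum : ∀ l, l ≠ 0 → ∑ x, χ (x * l) = 0) (h0 : χ 0 = 1) (l1 l2 : F) :
    ∑ v : F × F, χ (σ v.1 * l1 + σ v.2 * l2) =
      if l1 = 0 ∧ l2 = 0 then (Fintype.card F : ℤ) ^ 2 else 0 := by
  have hb : Function.Bijective σ := Finite.injective_iff_bijective.1 σ.injective
  have h1 : ∀ l, ∑ x, χ (σ x * l) = if l = 0 then (Fintype.card F : ℤ) else 0 := by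
    intro l
    rw [hb.sum_comp (fun x => χ (x * l))]
    split_ifs with h
    · subst h; simp [h0]
    · exact hsum l h
  rw [Fintype.sum_prod_type]
  simp only [hadd]
  rw [← Finset.sum_mul_sum, h1, h1]
  by_cases a : l1 = 0 <;> by_cases b : l2 = 0 <;> simp [a, b, sq]

theorem bf_sq [Fintype F] [DecidableEq F] (σ : F →+* F) (χ : F → ℤ)
    (hadd : ∀ x y, χ (x + y) = χ x * χ y)
    (hpm : ∀ x, χ x = 1 ∨ χ x = -1)
    (hσ : ∀ x, χ (σ x) = χ x)
    (hsum : ∀ l, l ≠ 0 → ∑ x, χ (x * l) = 0) (h0 : χ 0 = 1) (α a b c d : F) :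
    (∑ v, χ (bfQ σ α a b c d v)) ^ 2 = (Fintype.card F : ℤ) ^ 2 *
      ∑ u ∈ Finset.univ.filter (fun u => bfL1 σ α c d u = 0 ∧ bfL2 σ α c d u = 0),
        χ (bfQ σ α a b c d u) := by
  have hs : ∀ x, χ x * χ x = 1 := fun x => by rcases hpm x with h | h <;> simp [h]
  rw [sq, Finset.sum_mul_sum]
  have : ∀ v : F × F, ∑ w, χ (bfQ σ α a b c d v) * χ (bfQ σ α a b c d w) =
      ∑ u, χ (bfQ σ α a b c d u) * χ (σ v.1 * bfL1 σ α c d u + σ v.2 * bfL2 σ α c d u) := by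
    intro v
    rw [← Equiv.sum_comp (Equiv.addLeft v)]
    refine Finset.sum_congr rfl fun u _ => ?_
    simp only [Equiv.coe_addLeft]
    rw [bf_polar σ χ hadd hσ]
    linear_combination (χ (bfQ σ α a b c d u) *
      χ (σ v.1 * bfL1 σ α c d u + σ v.2 * bfL2 σ α c d u)) * hs (bfQ σ α a b c d v)
  simp only [this]
  rw [Finset.sum_comm]
  simp only [← Finset.mul_sum, bf_sum_lin σ χ hadd hsum h0]
  rw [Finset.sum_filter, Finset.mul_sum]
  refine Finset.sum_congr rfl fun u _ => ?_
  split_ifs <;> ring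

theorem bf_card [Fintype F] [DecidableEq F]
    (σ : F →+* F) (h1 : ∀ x, σ x = x → x = 0 ∨ x = 1)
    (h2 : ∀ x, σ (σ x) = x → x = 0 ∨ x = 1) (h3 : ∀ x : F, x ^ 4 = x → x = 0 ∨ x = 1)
    (hsq : ∀ x : F, ∃ y, y ^ 2 = x)
    (α c d : F) (hα0 : α ≠ 0) (hα1 : α ≠ 1) (hcd : c ≠ 0 ∨ d ≠ 0) :
    (Finset.univ.filter (fun u => bfL1 σ α c d u = 0 ∧ bfL2 σ α c d u = 0)).card ≤ 4 := by
  have key := bf_kernel σ h2 (α * σ α * c + c + d) (σ α * c + α * d) (α * c + σ α * d)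
    (c + α * σ α * d + d) (fun m1 m2 hm => bf_bad σ h1 h2 h3 hsq α c d hα0 hα1 hcd m1 m2 hm)
  set K := Finset.univ.filter (fun u : F × F => bfL1 σ α c d u = 0 ∧ bfL2 σ α c d u = 0) with hK
  by_cases hs : ∃ v1 ∈ K, ∃ v2 ∈ K, v1 ≠ 0 ∧ v2 ≠ 0 ∧ v2 ≠ v1
  · obtain ⟨v1, m1, v2, m2, n1, n2, n12⟩ := hs
    have : K ⊆ {0, v1, v2, v1 + v2} := by
      intro v3 m3
      simp only [hK, Finset.mem_filter, Finset.mem_univ, true_and, bfL1, bfL2,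
        CharTwo.add_eq_zero] at m1 m2 m3
      have := key v1.1 v1.2 v2.1 v2.2 v3.1 v3.2 m1.1 m1.2 m2.1 m2.2 m3.1 m3.2
        (by by_contra! h; exact n1 (Prod.ext h.1 h.2))
        (by by_contra! h; exact n2 (Prod.ext h.1 h.2)) (fun h => n12 (Prod.ext h.1 h.2))
      simpa [Prod.ext_iff] using this
    exact (Finset.card_le_card this).trans Finset.card_le_four
  · push Not at hs
    by_cases h' : ∃ v1 ∈ K, v1 ≠ 0
    · obtain ⟨v1, m1, n1⟩ := h'
      have : K ⊆ {0, v1} := by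
        intro v2 m2
        by_cases h : v2 = 0
        · simp [h]
        · simp [hs v1 m1 v2 m2 n1 h]
      exact ((Finset.card_le_card this).trans Finset.card_le_two).trans (by norm_num)
    · push Not at h'
      have : K ⊆ {0} := fun v m => by simp [h' v m]
      exact (Finset.card_le_card this).trans (by simp)

theorem bf_upper [Fintype F]
    (σ : F →+* F) (h1 : ∀ x, σ x = x → x = 0 ∨ x = 1)
    (h2 : ∀ x, σ (σ x) = x → x = 0 ∨ x = 1) (h3 : ∀ x : F, x ^ 4 = x → x = 0 ∨ x = 1)
    (hsq : ∀ x : F, ∃ y, y ^ 2 = x) (χ : F → ℤ)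
    (hadd : ∀ x y, χ (x + y) = χ x * χ y)
    (hpm : ∀ x, χ x = 1 ∨ χ x = -1)
    (hσ : ∀ x, χ (σ x) = χ x)
    (hsum : ∀ l, l ≠ 0 → ∑ x, χ (x * l) = 0) (h0 : χ 0 = 1)
    (α a b c d : F) (hα0 : α ≠ 0) (hα1 : α ≠ 1) (hcd : c ≠ 0 ∨ d ≠ 0) :
    |∑ v, χ (bfQ σ α a b c d v)| ≤ 2 * Fintype.card F := by
  classical
  refine abs_le_of_sq_le_sq ?_ (by positivity)
  rw [bf_sq σ χ hadd hpm hσ hsum h0]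
  have hc := bf_card σ h1 h2 h3 hsq α c d hα0 hα1 hcd
  have : ∑ u ∈ Finset.univ.filter (fun u => bfL1 σ α c d u = 0 ∧ bfL2 σ α c d u = 0),
        χ (bfQ σ α a b c d u) ≤ 4 := by
    refine (Finset.sum_le_card_nsmul _ _ 1 fun u _ => ?_).trans ?_
    · rcases hpm (bfQ σ α a b c d u) with h | h <;> simp [h]
    · simpa using mod_cast hc
  nlinarith [sq_nonneg (Fintype.card F : ℤ)]

theorem bf_lower [Fintype F]
    (σ : F →+* F) (h1 : ∀ x, σ x = x → x = 0 ∨ x = 1)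
    (h2 : ∀ x, σ (σ x) = x → x = 0 ∨ x = 1) (h3 : ∀ x : F, x ^ 4 = x → x = 0 ∨ x = 1)
    (hsq : ∀ x : F, ∃ y, y ^ 2 = x) (χ : F → ℤ)
    (hadd : ∀ x y, χ (x + y) = χ x * χ y)
    (hpm : ∀ x, χ x = 1 ∨ χ x = -1)
    (hσ : ∀ x, χ (σ x) = χ x)
    (hsum : ∀ l, l ≠ 0 → ∑ x, χ (x * l) = 0) (h0 : χ 0 = 1)
    (α : F) (hα0 : α ≠ 0) (hα1 : α ≠ 1) :
    ∃ a b c d, (c ≠ 0 ∨ d ≠ 0) ∧ |∑ v, χ (bfQ σ α a b c d v)| = 2 * Fintype.card F := by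
  classical
  have t : (2 : F) = 0 := CharTwo.two_eq_zero
  have hg : α * σ α + α + σ α ≠ 0 := by
    intro hg
    have hg' := congrArg σ hg
    simp only [map_add, map_mul, map_zero] at hg'
    have hb : 1 + σ α ≠ 0 := by
      intro h
      apply hα1
      apply σ.injective
      rw [map_one]; grind only
    have e1 : (1 + α) * (1 + σ α) = 1 := by grind only
    have e2 : (1 + σ (σ α)) * (1 + σ α) = 1 := by grind only
    have := add_left_cancel (mul_right_cancel₀ hb (e1.trans e2.symm))
    rcases h2 α this.symm with h | h
    · exact hα0 h
    · exact hα1 h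
  set g := α * σ α + α + σ α with hgdef
  have hg' : σ α * σ (σ α) + σ α + σ (σ α) = σ g := by simp [hgdef]
  have hσg : σ g ≠ 0 := by simpa using hg
  have hm1 : bfL1 σ α g⁻¹ g⁻¹ (1, 1) = 0 := by
    have : bfL1 σ α g⁻¹ g⁻¹ (1, 1) = σ g⁻¹ * (σ g) + g⁻¹ * g := by
      rw [← hg', hgdef]
      simp only [bfL1, map_add, map_mul, map_one]
      linear_combination t * (σ g⁻¹ + g⁻¹)
    rw [this, map_inv₀, inv_mul_cancel₀ hg, inv_mul_cancel₀ hσg]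
    linear_combination t
  have hm2 : bfL2 σ α g⁻¹ g⁻¹ (1, 1) = 0 := by
    have : bfL2 σ α g⁻¹ g⁻¹ (1, 1) = σ g⁻¹ * (σ g) + g⁻¹ * g := by
      rw [← hg', hgdef]
      simp only [bfL2, map_add, map_mul, map_one]
      linear_combination t * (σ g⁻¹ + g⁻¹)
    rw [this, map_inv₀, inv_mul_cancel₀ hg, inv_mul_cancel₀ hσg]
    linear_combination t
  have hgi : g⁻¹ ≠ 0 := inv_ne_zero hg
  generalize g⁻¹ = c at *
  -- some Walsh coefficient is nonzero
  obtain ⟨a, b, hW⟩ : ∃ a b, ∑ v, χ (bfQ σ α a b c c v) ≠ 0 := by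
    by_contra! hall
    have hz : ∑ ab : F × F, ∑ v, χ (bfQ σ α ab.1 ab.2 c c v) = 0 :=
      Finset.sum_eq_zero fun ab _ => hall _ _
    rw [Finset.sum_comm] at hz
    have : ∀ v : F × F, ∑ ab : F × F, χ (bfQ σ α ab.1 ab.2 c c v) =
        if v = 0 then (Fintype.card F : ℤ) ^ 2 else 0 := by
      intro v
      have hs := bf_sum_lin (RingHom.id F) χ hadd hsum h0 v.1 v.2
      have e : ∀ ab : F × F, χ (bfQ σ α ab.1 ab.2 c c v) =
          χ (bfQ σ α 0 0 c c v) * χ (ab.1 * v.1 + ab.2 * v.2) := by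
        intro ab
        rw [← hadd]; congr 1; simp only [bfQ]; ring
      simp only [e, ← Finset.mul_sum]
      simp only [RingHom.id_apply] at hs
      rw [hs]
      by_cases hv : v = 0
      · subst hv; simp [bfQ, h0]
      · have : ¬ (v.1 = 0 ∧ v.2 = 0) := fun h => hv (Prod.ext h.1 h.2)
        simp [hv, this]
    simp only [this] at hz
    simp at hz
  refine ⟨a, b, c, c, Or.inl hgi, ?_⟩
  have hS := bf_sq σ χ hadd hpm hσ hsum h0 α a b c c
  have hc := bf_card σ h1 h2 h3 hsq α c c hα0 hα1 (Or.inl hgi)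
  set K := Finset.univ.filter (fun u : F × F => bfL1 σ α c c u = 0 ∧ bfL2 σ α c c u = 0) with hK
  set W := ∑ v, χ (bfQ σ α a b c c v) with hWdef
  have hq : (Fintype.card F : ℤ) ≠ 0 := by simp
  have hSne : ∑ u ∈ K, χ (bfQ σ α a b c c u) ≠ 0 := by
    intro h
    rw [h, mul_zero] at hS
    exact hW (by simpa using hS)
  have hadd1 : ∀ u v, bfL1 σ α c c (u + v) = bfL1 σ α c c u + bfL1 σ α c c v := by
    intro u v; simp only [bfL1, Prod.fst_add, Prod.snd_add, map_add]; ring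
  have hadd2 : ∀ u v, bfL2 σ α c c (u + v) = bfL2 σ α c c u + bfL2 σ α c c v := by
    intro u v; simp only [bfL2, Prod.fst_add, Prod.snd_add, map_add]; ring
  have hone : ∀ u ∈ K, χ (bfQ σ α a b c c u) = 1 := by
    intro u hu
    have hu' : bfL1 σ α c c u = 0 ∧ bfL2 σ α c c u = 0 := by simpa [hK] using hu
    rcases hpm (bfQ σ α a b c c u) with h | h
    · exact h
    exfalso
    apply hSne
    have e : ∑ v ∈ K, χ (bfQ σ α a b c c v) = ∑ v ∈ K, χ (bfQ σ α a b c c (v + u)) := by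
      symm
      refine Finset.sum_nbij' (fun v => v + u) (fun v => v + u) ?_ ?_ ?_ ?_ ?_
      · intro v hv
        simp only [hK, Finset.mem_filter, Finset.mem_univ, true_and] at hv ⊢
        simp [hadd1, hadd2, hu', hv]
      · intro v hv
        simp only [hK, Finset.mem_filter, Finset.mem_univ, true_and] at hv ⊢
        simp [hadd1, hadd2, hu', hv]
      · intro v _; ext <;> simp [add_assoc, CharTwo.add_self_eq_zero]
      · intro v _; ext <;> simp [add_assoc, CharTwo.add_self_eq_zero]
      · intro v _; rfl
    have e' : ∑ v ∈ K, χ (bfQ σ α a b c c (v + u)) = - ∑ v ∈ K, χ (bfQ σ α a b c c v) := by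
      rw [← Finset.sum_neg_distrib]
      refine Finset.sum_congr rfl fun v _ => ?_
      rw [bf_polar σ χ hadd hσ, hu'.1, hu'.2, h]; simp [h0]
    rw [e'] at e
    omega
  rw [Finset.sum_congr rfl hone] at hS
  have hcard2 : 2 ≤ K.card := by
    have : ({(0 : F × F), (1, 1)} : Finset (F × F)) ⊆ K := by
      intro v hv
      simp only [Finset.mem_insert, Finset.mem_singleton] at hv
      rcases hv with rfl | rfl
      · simp [hK, bfL1, bfL2]
      · simp [hK, hm1, hm2]
    refine le_trans ?_ (Finset.card_le_card this)
    rw [Finset.card_pair]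
    intro h
    simpa using congrArg Prod.fst h
  simp only [Finset.sum_const, smul_eq_mul, nsmul_eq_mul, mul_one] at hS
  have hdvd : (Fintype.card F : ℤ) ∣ W := by
    rw [← Int.pow_dvd_pow_iff (two_ne_zero)]
    exact ⟨_, hS⟩
  obtain ⟨w, hw⟩ := hdvd
  rw [hw] at hS ⊢
  have hw2 : w ^ 2 = K.card := by
    apply mul_left_cancel₀ (pow_ne_zero 2 hq)
    linear_combination hS
  have hw4 : |w| = 2 := by
    have a1 : (2 : ℤ) ≤ K.card := by exact_mod_cast hcard2
    have a2 : (K.card : ℤ) ≤ 4 := by exact_mod_cast hc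
    rw [← hw2, ← sq_abs] at a1 a2
    have := abs_nonneg w
    generalize |w| = z at *
    have : z ≤ 2 := by nlinarith
    interval_cases z <;> omega
  rw [abs_mul, hw4, Nat.abs_cast]; ring
end

theorem bf_fix (k : ℕ) (hk : k ≠ 0) (j : ℕ) (hj : Nat.gcd j k = 1) (x : GaloisField 2 k)
    (hx : x ^ 2 ^ j = x) : x = 0 ∨ x = 1 := by
  by_cases h : x = 0
  · exact Or.inl h
  right
  have hc : Fintype.card (GaloisField 2 k) = 2 ^ k := by
    rw [← Nat.card_eq_fintype_card, GaloisField.card 2 k hk]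
  have h1 : x ^ (2 ^ j - 1) = 1 := by
    apply mul_left_cancel₀ h
    rw [← pow_succ', Nat.sub_add_cancel Nat.one_le_two_pow, hx, mul_one]
  have h2 : x ^ (2 ^ k - 1) = 1 := by
    rw [← hc]; exact FiniteField.pow_card_sub_one_eq_one x h
  have := Nat.dvd_gcd (orderOf_dvd_of_pow_eq_one h1) (orderOf_dvd_of_pow_eq_one h2)
  rw [Nat.pow_sub_one_gcd_pow_sub_one, hj] at this
  simpa using this

theorem absTrace_add (k : ℕ) (x y : GaloisField 2 k) :
    absTrace k (x + y) = absTrace k x + absTrace k y := by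
  simp only [absTrace, add_pow_char_pow, Finset.sum_add_distrib]

theorem absTrace_sq (k : ℕ) (hk : k ≠ 0) (x : GaloisField 2 k) :
    absTrace k (x ^ 2) = absTrace k x := by
  have hc : Fintype.card (GaloisField 2 k) = 2 ^ k := by
    rw [← Nat.card_eq_fintype_card, GaloisField.card 2 k hk]
  have hx : x ^ 2 ^ k = x := by rw [← hc]; exact FiniteField.pow_card x
  have e : absTrace k (x ^ 2) = ∑ j ∈ Finset.range k, x ^ 2 ^ (j + 1) := by
    simp only [absTrace, ← pow_mul, ← pow_succ']
  rw [e]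
  have h1 := Finset.sum_range_succ (fun j => x ^ 2 ^ j) k
  have h2 := Finset.sum_range_succ' (fun j => x ^ 2 ^ j) k
  rw [h1] at h2
  simp only [hx, pow_zero, pow_one] at h2
  exact (add_right_cancel h2).symm

theorem absTrace_sq' (k : ℕ) (hk : k ≠ 0) (x : GaloisField 2 k) :
    absTrace k x ^ 2 = absTrace k x := by
  conv_rhs => rw [← absTrace_sq k hk]
  simp only [absTrace]
  rw [sum_pow_char]
  refine Finset.sum_congr rfl fun j _ => ?_
  rw [← pow_mul, ← pow_mul, mul_comm]

theorem absTrace_frob (k : ℕ) (hk : k ≠ 0) (j : ℕ) (x : GaloisField 2 k) :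
    absTrace k (x ^ 2 ^ j) = absTrace k x := by
  induction j with
  | zero => simp
  | succ j ih => rw [pow_succ, pow_mul, absTrace_sq k hk, ih]

open Classical in
/-- The additive character `χ ∘ Tr`. -/
noncomputable def bfChi (k : ℕ) (x : GaloisField 2 k) : ℤ :=
  if absTrace k x = 0 then 1 else -1

theorem bfChi_pm (k : ℕ) (x : GaloisField 2 k) : bfChi k x = 1 ∨ bfChi k x = -1 := by
  unfold bfChi; split_ifs <;> simp

theorem bfChi_add (k : ℕ) (hk : k ≠ 0) (x y : GaloisField 2 k) :
    bfChi k (x + y) = bfChi k x * bfChi k y := by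
  have h : ∀ z, absTrace k z = 0 ∨ absTrace k z = 1 := by
    intro z
    have := absTrace_sq' k hk z
    have : absTrace k z * (absTrace k z - 1) = 0 := by linear_combination this
    rcases mul_eq_zero.1 this with h | h
    · exact Or.inl h
    · exact Or.inr (sub_eq_zero.1 h)
  have t : (1 + 1 : GaloisField 2 k) = 0 := CharTwo.add_self_eq_zero 1
  unfold bfChi
  rw [absTrace_add]
  rcases h x with h1 | h1 <;> rcases h y with h2 | h2 <;> simp [h1, h2, t]

theorem bfChi_zero (k : ℕ) : bfChi k 0 = 1 := by
  simp [bfChi, absTrace]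

theorem bfChi_one (k : ℕ) (hk : Odd k) : bfChi k 1 = -1 := by
  have : (k : GaloisField 2 k) = 1 := by
    obtain ⟨m, hm⟩ := hk
    have t : (2 : GaloisField 2 k) = 0 := CharTwo.two_eq_zero
    have : ((k : ℕ) : GaloisField 2 k) = ((2 * m + 1 : ℕ) : GaloisField 2 k) := congrArg _ hm
    rw [this]; push_cast; rw [t]; ring
  simp [bfChi, absTrace, this]

theorem bfChi_sum (k : ℕ) (hk : Odd k) (l : GaloisField 2 k) (hl : l ≠ 0) :
    ∑ x, bfChi k (x * l) = 0 := by
  have hk0 : k ≠ 0 := by rintro rfl; simp at hk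
  have e : ∑ x, bfChi k (x * l) = ∑ x, bfChi k ((x + l⁻¹) * l) := by
    symm; exact Equiv.sum_comp (Equiv.addRight l⁻¹) (fun x => bfChi k (x * l))
  have e' : ∑ x, bfChi k ((x + l⁻¹) * l) = - ∑ x, bfChi k (x * l) := by
    rw [← Finset.sum_neg_distrib]
    refine Finset.sum_congr rfl fun x _ => ?_
    rw [add_mul, inv_mul_cancel₀ hl, bfChi_add k hk0, bfChi_one k hk]; ring
  rw [e'] at e
  omega

theorem bf_surj (k : ℕ) (t : ℕ) (x : GaloisField 2 k) : ∃ y : GaloisField 2 k, y ^ 2 ^ t = x := by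
  have hb : Function.Bijective (iterateFrobenius (GaloisField 2 k) 2 t) :=
    Finite.injective_iff_bijective.1 (RingHom.injective _)
  obtain ⟨y, hy⟩ := hb.2 x
  exact ⟨y, by rw [← hy, iterateFrobenius_def]⟩

theorem bf_walsh_eq (k i t : ℕ) (hk : k ≠ 0) (α a b c d : GaloisField 2 k) :
    butterflyWalsh k ((2 ^ i + 1) * 2 ^ t) α a b (c ^ 2 ^ t) (d ^ 2 ^ t) =
      ∑ v, bfChi k (bfQ (iterateFrobenius (GaloisField 2 k) 2 i) α a b c d v) := by
  rw [Fintype.sum_prod_type]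
  unfold butterflyWalsh
  refine Finset.sum_congr rfl fun x _ => Finset.sum_congr rfl fun y _ => ?_
  have e : ∀ z : GaloisField 2 k, z ^ ((2 ^ i + 1) * 2 ^ t) =
      (z * iterateFrobenius (GaloisField 2 k) 2 i z) ^ 2 ^ t := by
    intro z
    rw [iterateFrobenius_def, pow_mul, ← pow_succ']
  have h : absTrace k (c ^ 2 ^ t * ((α * x + y) ^ ((2 ^ i + 1) * 2 ^ t) + x ^ ((2 ^ i + 1) * 2 ^ t)) +
      d ^ 2 ^ t * ((x + α * y) ^ ((2 ^ i + 1) * 2 ^ t) + y ^ ((2 ^ i + 1) * 2 ^ t)) + a * x + b * y) =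
      absTrace k (bfQ (iterateFrobenius (GaloisField 2 k) 2 i) α a b c d (x, y)) := by
    simp only [bfQ]
    rw [e, e, e, e, ← add_pow_char_pow, ← add_pow_char_pow, ← mul_pow, ← mul_pow, ← add_pow_char_pow,
      absTrace_add, absTrace_add, absTrace_add k _ (b * y), absTrace_add k _ (a * x),
      absTrace_frob k hk]
  rw [h]
  unfold bfChi
  congr

theorem closedButterfly_nonlinearity (k i t : ℕ) (hk : Odd k) (hk3 : 3 ≤ k)
    (hipos : 0 < i) (hgcd : Nat.gcd i k = 1) (ht : t ≤ k - 1)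
    (α : GaloisField 2 k) (hα0 : α ≠ 0) (hα1 : α ≠ 1) :
    IsGreatest {m : ℤ | ∃ a b c d : GaloisField 2 k, (c, d) ≠ (0, 0) ∧
        m = |butterflyWalsh k ((2 ^ i + 1) * 2 ^ t) α a b c d|} (2 ^ (k + 1)) ∧
    (2 : ℤ) ^ (2 * k - 1) - (2 ^ (k + 1)) / 2 = 2 ^ (2 * k - 1) - 2 ^ k := by
  have hk0 : k ≠ 0 := by omega
  have hc : (Fintype.card (GaloisField 2 k) : ℤ) = 2 ^ k := by
    rw [← Nat.card_eq_fintype_card, GaloisField.card 2 k hk0]; simp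
  have h2k : Nat.gcd 2 k = 1 := (Nat.coprime_two_left).2 hk
  have h1 : ∀ x, iterateFrobenius (GaloisField 2 k) 2 i x = x → x = 0 ∨ x = 1 := by
    intro x hx
    rw [iterateFrobenius_def] at hx
    exact bf_fix k hk0 i hgcd x hx
  have h2 : ∀ x, iterateFrobenius (GaloisField 2 k) 2 i
      (iterateFrobenius (GaloisField 2 k) 2 i x) = x → x = 0 ∨ x = 1 := by
    intro x hx
    rw [iterateFrobenius_def, iterateFrobenius_def, ← pow_mul, ← pow_add, ← two_mul] at hx
    exact bf_fix k hk0 (2 * i) (Nat.Coprime.mul_left h2k hgcd) x hx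
  have h3 : ∀ x : GaloisField 2 k, x ^ 4 = x → x = 0 ∨ x = 1 :=
    fun x hx => bf_fix k hk0 2 h2k x (by simpa using hx)
  have hsq : ∀ x : GaloisField 2 k, ∃ y, y ^ 2 = x := fun x => by
    simpa using bf_surj k 1 x
  have hσ : ∀ x, bfChi k (iterateFrobenius (GaloisField 2 k) 2 i x) = bfChi k x := by
    intro x
    unfold bfChi
    rw [iterateFrobenius_def, absTrace_frob k hk0]
  refine ⟨⟨?_, ?_⟩, ?_⟩
  · obtain ⟨a, b, c, d, hcd, hW⟩ := bf_lower (iterateFrobenius (GaloisField 2 k) 2 i) h1 h2 h3 hsq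
      (bfChi k) (bfChi_add k hk0) (bfChi_pm k) hσ (bfChi_sum k hk) (bfChi_zero k) α hα0 hα1
    refine ⟨a, b, c ^ 2 ^ t, d ^ 2 ^ t, ?_, ?_⟩
    · intro h
      simp only [Prod.mk.injEq] at h
      rcases hcd with h' | h'
      · exact h' (pow_eq_zero_iff (by positivity) |>.1 h.1)
      · exact h' (pow_eq_zero_iff (by positivity) |>.1 h.2)
    · rw [bf_walsh_eq k i t hk0, hW, hc]; ring
  · rintro m ⟨a, b, c, d, hcd, rfl⟩
    obtain ⟨c, rfl⟩ := bf_surj k t c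
    obtain ⟨d, rfl⟩ := bf_surj k t d
    rw [bf_walsh_eq k i t hk0]
    have := bf_upper (iterateFrobenius (GaloisField 2 k) 2 i) h1 h2 h3 hsq
      (bfChi k) (bfChi_add k hk0) (bfChi_pm k) hσ (bfChi_sum k hk) (bfChi_zero k) α a b c d hα0 hα1
      (by
        by_contra! h
        apply hcd
        simp [h.1, h.2])
    rw [hc] at this
    calc _ ≤ _ := this
      _ = 2 ^ (k + 1) := by ring
  · rw [pow_succ, Int.mul_ediv_cancel _ (by norm_num)]
end

section
/- Let k be an odd positive integer, i a positive integer with gcd(i,k) = 1, t a natural number with 0 ≤ t ≤ k−1, e = (2^i + 1)·2^t, and F = GaloisField 2 k. Define V : F × F → F × F by V(x,y) = ((x + y)^e + x^e, (x + y)^e + y^e), with components V₁, V₂. Then for all a, b, c, d ∈ F with (c,d) ≠ (0,0), the Walsh transform value W((a,b),(c,d)) = Σ_{x,y ∈ F} χ(Tr(c·V₁(x,y) + d·V₂(x,y) + a·x + b·y)) lies in the set {0, 2^(k+1), −2^(k+1)} of integers. -/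
/-- The Walsh transform `W((a,b),(c,d)) = Σ_{x,y} χ(Tr(c·V₁(x,y) + d·V₂(x,y) + ax + by))`
of the closed butterfly with trivial coefficient,
`V(x,y) = ((x+y)^e + x^e, (x+y)^e + y^e)`, where `χ(0) = 1` and `χ(1) = -1`. -/
noncomputable def butterflyWalshOne (k e : ℕ) (a b c d : GaloisField 2 k) : ℤ :=
  haveI := Classical.decEq (GaloisField 2 k)
  ∑ x : GaloisField 2 k, ∑ y : GaloisField 2 k,
    if absTrace k (c * ((x + y) ^ e + x ^ e) + d * ((x + y) ^ e + y ^ e)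
        + a * x + b * y) = 0 then 1 else -1

section helpers

variable {L : Type*} [Field L] [Fintype L] [CharP L 2]

lemma bw_fix {k j : ℕ} (hcard : Fintype.card L = 2 ^ (2 * k)) (hgcd : Nat.gcd j k = 1)
    (U : L) (hU : U ^ 2 ^ (2 * j) = U) : U ^ 4 = U := by
  have key : ∀ n, (frobenius L 2)^[n] U = U ^ 2 ^ n := fun n => by
    rw [← coe_iterateFrobenius, iterateFrobenius_def]
  have h1 : Function.IsPeriodicPt (frobenius L 2) (2 * j) U := by
    unfold Function.IsPeriodicPt Function.IsFixedPt
    rw [key, hU]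
  have h2 : Function.IsPeriodicPt (frobenius L 2) (2 * k) U := by
    unfold Function.IsPeriodicPt Function.IsFixedPt
    rw [key, ← hcard, FiniteField.pow_card]
  have h3 := h1.gcd h2
  rw [Nat.gcd_mul_left, hgcd] at h3
  unfold Function.IsPeriodicPt Function.IsFixedPt at h3
  rw [key] at h3
  simpa using h3

lemma bw_pow4 {j : ℕ} (hj : Even j) (U : L) (hU : U ^ 4 = U) : U ^ 2 ^ j = U := by
  obtain ⟨m, rfl⟩ := hj
  rw [← two_mul, pow_mul]
  induction m with
  | zero => simp
  | succ m ih => rw [pow_succ, pow_mul, ih]; simpa using hU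

lemma bw_surj {k j : ℕ} (hcard : Fintype.card L = 2 ^ (2 * k)) (hgcd : Nat.gcd j k = 1)
    (hj : Even j) (g : L) (hg : g ≠ 0) : ∃ s : L, s ≠ 0 ∧ s ^ (2 ^ j + 1) = g := by
  have hinj : Function.Injective (powMonoidHom (2 ^ j + 1) : Lˣ →* Lˣ) := by
    rw [injective_iff_map_eq_one]
    intro u hu
    have h0 : (u : L) ^ (2 ^ j + 1) = 1 := by
      have := congrArg (Units.val) hu
      simpa using this
    have hne : (u : L) ≠ 0 := u.ne_zero
    have h1 : (u : L) ^ 2 ^ (2 * j) = u := by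
      have e : 2 ^ (2 * j) = (2 ^ j + 1) * (2 ^ j - 1) + 1 := by
        obtain ⟨r, hr⟩ := Nat.exists_eq_add_of_le' (Nat.one_le_two_pow (n := j))
        rw [two_mul, pow_add, hr]
        simp only [Nat.add_sub_cancel]
        ring
      rw [e, pow_succ, pow_mul, h0, one_pow, one_mul]
    have h4 := bw_fix hcard hgcd _ h1
    have h5 := bw_pow4 hj _ h4
    rw [pow_succ, h5] at h0
    have h6 : ((u : L) + 1) ^ 2 = 0 := by
      linear_combination h0 + ((u : L) + 1) * (CharTwo.two_eq_zero (R := L))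
    have h7 := pow_eq_zero_iff (two_ne_zero) |>.1 h6
    ext
    rw [Units.val_one]
    exact CharTwo.add_eq_zero.1 h7
  obtain ⟨s, hs⟩ := (Finite.injective_iff_surjective.1 hinj) (Units.mk0 g hg)
  refine ⟨s, s.ne_zero, ?_⟩
  have := congrArg (Units.val) hs
  simpa using this

lemma bw_core {k j : ℕ} (hcard : Fintype.card L = 2 ^ (2 * k)) (hgcd : Nat.gcd j k = 1)
    (hj : Even j) (w : L) (hw : w ^ 2 = w + 1) (ψ : L → ℤ)
    (hadd : ∀ x y, ψ (x + y) = ψ x * ψ y) (hpm : ∀ x, ψ x = 1 ∨ ψ x = -1)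
    (hsq : ∀ x, ψ (x ^ 2) = ψ x) (hnt : ∃ x, ψ x ≠ 1) (δ : L) :
    (∑ X : L, ψ (X ^ (2 ^ j + 1) + δ * X)) ∈ ({0, 2 ^ (k + 1), -2 ^ (k + 1)} : Set ℤ) := by
  classical
  have hself : ∀ x, ψ x * ψ x = 1 := fun x => by rcases hpm x with h | h <;> simp [h]
  have h0 : ψ 0 = 1 := by
    have h := hadd 0 0
    rwa [add_zero, hself] at h
  have hq : ∀ n x, ψ (x ^ 2 ^ n) = ψ x := by
    intro n x
    induction n with
    | zero => simp
    | succ n ih => rw [pow_succ, pow_mul, hsq, ih]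
  have hsum0 : ∑ X : L, ψ X = 0 := by
    obtain ⟨x, hx⟩ := hnt
    have h : ∑ X : L, ψ (x + X) = ∑ X : L, ψ X :=
      Fintype.sum_equiv (Equiv.addLeft x) _ _ (fun _ => rfl)
    simp only [hadd, ← Finset.mul_sum] at h
    rcases hpm x with h' | h'
    · exact absurd h' hx
    · rw [h'] at h; linarith
  have hbij : Function.Bijective (fun X : L => X ^ 2 ^ j) := by
    refine Finite.injective_iff_bijective.1 ?_
    have := iterateFrobenius_inj L 2 j
    intro a b hab
    apply this
    simpa [iterateFrobenius_def] using hab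
  have hsumB : ∀ U : L, ∑ X : L, ψ (X ^ 2 ^ j * U + X * U ^ 2 ^ j)
      = if U ^ 4 = U then 2 ^ (2 * k) else 0 := by
    intro U
    have e1 : ∀ X : L, ψ (X ^ 2 ^ j * U + X * U ^ 2 ^ j)
        = ψ (X ^ 2 ^ j * (U + U ^ 2 ^ (2 * j))) := by
      intro X
      rw [mul_add, hadd, hadd, ← hq j (X * U ^ 2 ^ j), mul_pow, ← pow_mul, ← pow_add, ← two_mul]
    simp only [e1]
    rw [Function.Bijective.sum_comp hbij (fun Y => ψ (Y * (U + U ^ 2 ^ (2 * j))))]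
    split_ifs with h4
    · rw [bw_pow4 (even_two_mul j) U h4, CharTwo.add_self_eq_zero]
      simp [h0, hcard]
    · have hne : U + U ^ 2 ^ (2 * j) ≠ 0 := by
        intro h
        exact h4 (bw_fix hcard hgcd U (CharTwo.add_eq_zero.1 h).symm)
      rw [← hsum0]
      exact Fintype.sum_equiv (Equiv.mulRight₀ _ hne) _ _ (fun _ => rfl)
  have hfrob : ∀ x y : L, (x + y) ^ 2 ^ j = x ^ 2 ^ j + y ^ 2 ^ j := fun x y => add_pow_char_pow x y _ _
  set f : L → ℤ := fun X => ψ (X ^ (2 ^ j + 1) + δ * X) with hf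
  have hff : ∀ X U, f X * f (X + U) = f U * ψ (X ^ 2 ^ j * U + X * U ^ 2 ^ j) := by
    intro X U
    simp only [hf]
    rw [← hadd, ← hadd]
    congr 1
    rw [pow_succ, pow_succ, pow_succ, hfrob]
    linear_combination (X ^ 2 ^ j * X + δ * X) * (CharTwo.two_eq_zero (R := L))
  have hsqsum : (∑ X : L, f X) ^ 2 = 2 ^ (2 * k) * ∑ U : L, if U ^ 4 = U then f U else 0 := by
    calc (∑ X : L, f X) ^ 2 = ∑ X : L, ∑ Y : L, f X * f Y := by rw [sq, Finset.sum_mul_sum]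
      _ = ∑ X : L, ∑ U : L, f X * f (X + U) := by
          refine Finset.sum_congr rfl fun X _ => ?_
          exact (Fintype.sum_equiv (Equiv.addLeft X) _ _ (fun _ => rfl)).symm
      _ = ∑ U : L, f U * ∑ X : L, ψ (X ^ 2 ^ j * U + X * U ^ 2 ^ j) := by
          rw [Finset.sum_comm]
          simp only [hff, Finset.mul_sum]
      _ = _ := by
          rw [Finset.mul_sum]
          refine Finset.sum_congr rfl fun U _ => ?_
          rw [hsumB]
          split_ifs <;> ring
  have h2 : (2 : L) = 0 := CharTwo.two_eq_zero
  have hset : (Finset.univ.filter fun U : L => U ^ 4 = U) = {0, 1, w, w + 1} := by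
    ext U
    simp only [Finset.mem_filter, Finset.mem_univ, true_and, Finset.mem_insert,
      Finset.mem_singleton]
    constructor
    · intro h
      have : U * ((U - 1) * ((U - w) * (U - (w + 1)))) = 0 := by
        linear_combination h + (U^2 - U) * hw + (U^2 - U * w - U ^ 3 * w - U ^ 3 + 2 * U^2 * w) * h2
      rcases mul_eq_zero.1 this with h | h
      · exact Or.inl h
      rcases mul_eq_zero.1 h with h | h
      · exact Or.inr (Or.inl (sub_eq_zero.1 h))
      rcases mul_eq_zero.1 h with h | h
      · exact Or.inr (Or.inr (Or.inl (sub_eq_zero.1 h)))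
      · exact Or.inr (Or.inr (Or.inr (sub_eq_zero.1 h)))
    · have hw4 : w ^ 4 = w := by
        linear_combination (w ^ 2 + w + 2) * hw + (w + 1) * h2
      rintro (rfl | rfl | rfl | rfl)
      · simp
      · simp
      · exact hw4
      · have : (w + 1) ^ 4 = w ^ 4 + 1 ^ 4 := add_pow_char_pow w 1 2 2
        rw [this, hw4, one_pow]
  have hw0 : w ≠ 0 := by rintro rfl; simp at hw
  have hw1 : w ≠ 1 := by
    rintro rfl
    rw [one_pow, CharTwo.add_self_eq_zero] at hw
    exact one_ne_zero hw
  have hw10 : w + 1 ≠ 0 := fun h => hw1 (CharTwo.add_eq_zero.1 h)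
  have hT : (∑ U : L, if U ^ 4 = U then f U else 0)
      = (1 + ψ (1 + δ)) * (1 + ψ ((1 + δ) * w)) := by
    have hfl : ∀ U : L, U ^ 4 = U → f U = ψ ((1 + δ) * U) := by
      intro U hU
      simp only [hf]
      rw [pow_succ, bw_pow4 hj U hU, hadd, ← sq, hsq, ← hadd]
      congr 1; ring
    rw [← Finset.sum_filter]
    rw [Finset.sum_congr rfl (g := fun U => ψ ((1 + δ) * U))
      (fun U hU => hfl U (Finset.mem_filter.1 hU).2), hset]
    rw [Finset.sum_insert, Finset.sum_insert, Finset.sum_insert, Finset.sum_singleton]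
    · rw [mul_add (1 + δ) w 1, hadd ((1 + δ) * w)]
      simp only [mul_zero, mul_one, h0]; ring
    · simp
    · simp [hw1.symm, hw0]
    · simp [hw0.symm, hw10.symm]
  rw [hT] at hsqsum
  have hfin : (∑ X : L, f X) ^ 2 = 0 ∨ (∑ X : L, f X) ^ 2 = (2 ^ (k + 1)) ^ 2 := by
    rw [hsqsum]
    rcases hpm (1 + δ) with h | h <;> rcases hpm ((1 + δ) * w) with h' | h' <;> rw [h, h']
    · right; ring
    all_goals left; ring
  rcases hfin with h | h
  · left; exact pow_eq_zero_iff two_ne_zero |>.1 h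
  · rcases sq_eq_sq_iff_eq_or_eq_neg.1 h with h | h
    · right; left; exact h
    · right; right; exact h

lemma bw_core' {k j : ℕ} (hcard : Fintype.card L = 2 ^ (2 * k)) (hgcd : Nat.gcd j k = 1)
    (hj : Even j) (w : L) (hw : w ^ 2 = w + 1) (ψ : L → ℤ)
    (hadd : ∀ x y, ψ (x + y) = ψ x * ψ y) (hpm : ∀ x, ψ x = 1 ∨ ψ x = -1)
    (hsq : ∀ x, ψ (x ^ 2) = ψ x) (hnt : ∃ x, ψ x ≠ 1) (γ δ : L) (hγ : γ ≠ 0) :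
    (∑ X : L, ψ (γ * X ^ (2 ^ j + 1) + δ * X))
      ∈ ({0, 2 ^ (k + 1), -2 ^ (k + 1)} : Set ℤ) := by
  obtain ⟨s, hs0, hs⟩ := bw_surj hcard hgcd hj γ⁻¹ (inv_ne_zero hγ)
  have := bw_core hcard hgcd hj w hw ψ hadd hpm hsq hnt (δ * s)
  convert this using 1
  symm
  refine Fintype.sum_equiv (Equiv.mulLeft₀ s hs0) _ _ (fun X => ?_)
  simp only [Equiv.mulLeft₀_apply]
  rw [mul_pow, hs, ← mul_assoc, mul_inv_cancel₀ hγ, one_mul, mul_assoc]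

end helpers

/-- The quadratic extension of `GaloisField 2 k` (for `k` odd). -/
abbrev BwExt (k : ℕ) := QuadraticAlgebra (GaloisField 2 k) 1 1

section traceFacts

variable {k : ℕ}

lemma bw_card (hk : k ≠ 0) : Fintype.card (GaloisField 2 k) = 2 ^ k := by
  rw [← Nat.card_eq_fintype_card, GaloisField.card 2 k hk]

lemma bw_tr_add (x y : GaloisField 2 k) : absTrace k (x + y) = absTrace k x + absTrace k y := by
  simp only [absTrace, ← Finset.sum_add_distrib]
  exact Finset.sum_congr rfl fun j _ => add_pow_char_pow x y _ _

lemma bw_tr_alg (hk : k ≠ 0) (x : GaloisField 2 k) :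
    absTrace k x = algebraMap (ZMod 2) _ (Algebra.trace (ZMod 2) (GaloisField 2 k) x) := by
  rw [FiniteField.algebraMap_trace_eq_sum_pow, GaloisField.finrank 2 hk]
  simp [absTrace]

lemma bw_tr_cases (hk : k ≠ 0) (x : GaloisField 2 k) : absTrace k x = 0 ∨ absTrace k x = 1 := by
  rw [bw_tr_alg hk]
  generalize (Algebra.trace (ZMod 2) (GaloisField 2 k) x) = z
  have : z = 0 ∨ z = 1 := by revert z; decide
  rcases this with rfl | rfl <;> simp

lemma bw_tr_sq (hk : k ≠ 0) (x : GaloisField 2 k) : absTrace k (x ^ 2) = absTrace k x := by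
  have h : absTrace k (x ^ 2) = (absTrace k x) ^ 2 := by
    simp only [absTrace]
    rw [CharTwo.sum_sq]
    exact Finset.sum_congr rfl fun j _ => by rw [← pow_mul, ← pow_mul, mul_comm]
  rw [h]
  rcases bw_tr_cases hk x with h | h <;> simp [h]

lemma bw_tr_pow (hk : k ≠ 0) (t : ℕ) (x : GaloisField 2 k) :
    absTrace k (x ^ 2 ^ t) = absTrace k x := by
  induction t with
  | zero => simp
  | succ n ih => rw [pow_succ, pow_mul, bw_tr_sq hk, ih]

lemma bw_tr_ne (hk : k ≠ 0) : ∃ x : GaloisField 2 k, absTrace k x ≠ 0 := by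
  obtain ⟨x, hx⟩ := Algebra.trace_surjective (ZMod 2) (GaloisField 2 k) 1
  exact ⟨x, by rw [bw_tr_alg hk, hx]; simp⟩

lemma bw_noroot (hk : Odd k) (r : GaloisField 2 k) : r ^ 2 ≠ 1 + 1 * r := by
  intro h
  have hk0 : k ≠ 0 := by rintro rfl; simp at hk
  rw [one_mul] at h
  have h2 : (2 : GaloisField 2 k) = 0 := CharTwo.two_eq_zero
  have h4 : r ^ 4 = r := by
    linear_combination (r ^ 2 + r + 2) * h + (r + 1) * h2
  have hc := FiniteField.pow_card r
  rw [bw_card hk0] at hc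
  obtain ⟨m, rfl⟩ := hk
  rw [pow_succ, pow_mul, bw_pow4 (even_two_mul m) r h4] at hc
  rw [hc] at h
  have : (1 : GaloisField 2 (2 * m + 1)) = 0 := by linear_combination -h
  exact one_ne_zero this

end traceFacts

/-- Every Walsh transform value of the closed butterfly with trivial coefficient
`α = 1`, `k` odd, `gcd(i,k) = 1` and exponent `e = (2^i+1)·2^t` lies in
`{0, ±2^(k+1)}`. -/
theorem closedButterfly_trivial_coeff_walsh_values (k i t : ℕ) (hk : Odd k)
    (hkpos : 0 < k) (hipos : 0 < i) (hgcd : Nat.gcd i k = 1) (ht : t ≤ k - 1)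
    (a b c d : GaloisField 2 k) (hcd : (c, d) ≠ (0, 0)) :
    butterflyWalshOne k ((2 ^ i + 1) * 2 ^ t) a b c d
      ∈ ({0, 2 ^ (k + 1), -2 ^ (k + 1)} : Set ℤ) := by
  classical
  have hk0 : k ≠ 0 := hkpos.ne'
  have hcardF := bw_card hk0
  -- make the exponent even
  obtain ⟨j, hj, hjk, hij⟩ : ∃ j, Even j ∧ Nat.gcd j k = 1 ∧
      ∀ x : GaloisField 2 k, x ^ 2 ^ i = x ^ 2 ^ j := by
    rcases Nat.even_or_odd i with h | h
    · exact ⟨i, h, hgcd, fun _ => rfl⟩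
    · refine ⟨i + k, h.add_odd hk, by simpa using hgcd, fun x => ?_⟩
      rw [pow_add, pow_mul, ← hcardF, FiniteField.pow_card]
  -- remove the Frobenius twist
  have hsurj : ∀ x : GaloisField 2 k, ∃ y, y ^ 2 ^ t = x := by
    have hinj := iterateFrobenius_inj (GaloisField 2 k) 2 t
    intro x
    obtain ⟨y, hy⟩ := Finite.injective_iff_surjective.1 hinj x
    exact ⟨y, by simpa [iterateFrobenius_def] using hy⟩
  obtain ⟨c, rfl⟩ := hsurj c
  obtain ⟨d, rfl⟩ := hsurj d
  have hcd' : ¬ (c = 0 ∧ d = 0) := by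
    rintro ⟨rfl, rfl⟩
    exact hcd (by simp)
  have hfact : Fact (∀ r : GaloisField 2 k, r ^ 2 ≠ 1 + 1 * r) := ⟨bw_noroot hk⟩
  let : Fintype (BwExt k) := Fintype.ofEquiv _ (QuadraticAlgebra.equivProd 1 1).symm
  have hcard : Fintype.card (BwExt k) = 2 ^ (2 * k) := by
    rw [Fintype.ofEquiv_card, Fintype.card_prod, hcardF]; ring
  have : CharP (BwExt k) 2 := charP_of_injective_algebraMap (algebraMap (GaloisField 2 k) (BwExt k)).injective 2
  let w : (BwExt k) := ⟨0, 1⟩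
  have hw : w ^ 2 = w + 1 := by
    rw [sq]; ext <;> simp [w, QuadraticAlgebra.re_one, QuadraticAlgebra.im_one]
  let ψ : (BwExt k) → ℤ := fun z => if absTrace k z.im = 0 then 1 else -1
  have hadd : ∀ x y, ψ (x + y) = ψ x * ψ y := by
    intro x y
    simp only [ψ, QuadraticAlgebra.im_add, bw_tr_add]
    rcases bw_tr_cases hk0 x.im with h | h <;> rcases bw_tr_cases hk0 y.im with h' | h' <;>
      simp [h, h', CharTwo.add_self_eq_zero]
  have hpm : ∀ x, ψ x = 1 ∨ ψ x = -1 := by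
    intro x; simp only [ψ]; split_ifs <;> simp
  have hsq : ∀ x, ψ (x ^ 2) = ψ x := by
    intro x
    have : (x ^ 2).im = x.im ^ 2 := by
      rw [sq, QuadraticAlgebra.im_mul]
      linear_combination (x.re * x.im) * (CharTwo.two_eq_zero (R := GaloisField 2 k))
    simp only [ψ, this, bw_tr_sq hk0]
  have hnt : ∃ x, ψ x ≠ 1 := by
    obtain ⟨x, hx⟩ := bw_tr_ne hk0
    exact ⟨⟨0, x⟩, by simp [ψ, hx]⟩
  have hγ : (⟨c, d⟩ : (BwExt k)) ≠ 0 := by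
    intro h
    exact hcd' ⟨congrArg QuadraticAlgebra.re h, congrArg QuadraticAlgebra.im h⟩
  have main := bw_core' hcard hjk hj w hw ψ hadd hpm hsq hnt ⟨c, d⟩ ⟨a + b, a⟩ hγ
  convert main using 1
  unfold butterflyWalshOne
  rw [← Fintype.sum_prod_type']
  refine Fintype.sum_equiv (QuadraticAlgebra.equivProd 1 1).symm _ _ ?_
  rintro ⟨x, y⟩
  have hX : ((QuadraticAlgebra.equivProd (1 : GaloisField 2 k) 1).symm (x, y) : (BwExt k)) = ⟨x, y⟩ := rfl
  rw [hX]
  have hXq : (⟨x, y⟩ : (BwExt k)) ^ 2 ^ j = ⟨x ^ 2 ^ j, y ^ 2 ^ j⟩ := by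
    have e : ∀ u v : GaloisField 2 k, (⟨u, v⟩ : (BwExt k)) = algebraMap _ (BwExt k) u + algebraMap _ (BwExt k) v * w := by
      intro u v
      ext <;> simp [w]
    have hw4 : w ^ 4 = w := by
      linear_combination (w ^ 2 + w + 2) * hw + (w + 1) * (CharTwo.two_eq_zero (R := (BwExt k)))
    rw [e, e, add_pow_char_pow, mul_pow, bw_pow4 hj w hw4, map_pow, map_pow]
  have hpe : ∀ z : GaloisField 2 k, z ^ ((2 ^ i + 1) * 2 ^ t) = (z ^ 2 ^ j * z) ^ 2 ^ t := by
    intro z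
    rw [pow_mul, pow_succ, hij]
  have hfr : ∀ u v : GaloisField 2 k, u ^ 2 ^ t + v ^ 2 ^ t = (u + v) ^ 2 ^ t :=
    fun u v => (add_pow_char_pow u v _ _).symm
  have h2 : (2 : GaloisField 2 k) = 0 := CharTwo.two_eq_zero
  have hlhs : absTrace k
      (c ^ 2 ^ t * ((x + y) ^ ((2 ^ i + 1) * 2 ^ t) + x ^ ((2 ^ i + 1) * 2 ^ t))
        + d ^ 2 ^ t * ((x + y) ^ ((2 ^ i + 1) * 2 ^ t) + y ^ ((2 ^ i + 1) * 2 ^ t))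
        + a * x + b * y)
      = absTrace k ((⟨c, d⟩ * ⟨x, y⟩ ^ (2 ^ j + 1) + ⟨a + b, a⟩ * ⟨x, y⟩ : BwExt k).im) := by
    rw [hpe, hpe, hpe, hfr, hfr, ← mul_pow, ← mul_pow, hfr, add_assoc, bw_tr_add, bw_tr_pow hk0,
      ← bw_tr_add, pow_succ, hXq, add_pow_char_pow x y]
    congr 1
    simp only [QuadraticAlgebra.im_add, QuadraticAlgebra.im_mul, QuadraticAlgebra.re_mul]
    linear_combination (c * x ^ 2 ^ j * x - a * y) * h2
  simp only [ψ, hlhs]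
end
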